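/- arXiv:1911.10577 — 2 statements merged into one kernel-verified Lean document; each statement's English description precedes it below -/
import Mathlib

section
/- Let R ⊂ S be an integral t-closed FCP ring extension and let I := (R:S) be the conductor (the largest ideal of S contained in R; equivalently, the annihilator of the R-module S/R). Then V_R(I) = MSupp(S/R) and this set is finite; moreover, every prime ideal Q of S containing I satisfies Q = PS, where P := Q ∩ R. -/
/-!
FCP and integrality make every subalgebra a finite `R`-module. If `T ⋖ U`, then for every ideal
`𝔞` of `R` the subalgebra `T + 𝔞U` is `T` or `U`, so `𝔞(U/T)` is `0` or `U/T`; by Nakayama, `U/T` is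
a vector space over a residue field of `R`. Climbing a maximal chain from `R` to `S`, the module
`S/R` is Artinian, hence so is `R/Ann(S/R) = R/(I ∩ R)`, which embeds in `End_R(S/R)`. This
describes `V(I ∩ R)`, and it makes the finite `R/(I ∩ R)`-algebra `S/I` an Artinian ring.

t-closedness with `r = 0` makes `S/I` reduced, hence semisimple, so that an ideal `J ⊇ I` has the
form `bS + I` with `b` idempotent modulo `I`; t-closedness with `r = 1` puts `b` in `R`. As `I` also
lies in `R`, this gives `J = (J ∩ R)S`.
-/

/-- A maximal chain of length `n` from `T` to `U`: each step is a covering. -/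
def IsMaxChainFromTo {α : Type*} [PartialOrder α] (T U : α) (n : ℕ)
    (c : Fin (n + 1) → α) : Prop :=
  c 0 = T ∧ c (Fin.last n) = U ∧ ∀ i : Fin n, c i.castSucc ⋖ c i.succ

/-- The subextension determined by `T ≤ U` is catenarian: all maximal chains from
`T` to `U` have the same length. -/
def IsCatenarianFromTo {α : Type*} [PartialOrder α] (T U : α) : Prop :=
  ∀ (n m : ℕ) (c : Fin (n + 1) → α) (d : Fin (m + 1) → α),
    IsMaxChainFromTo T U n c → IsMaxChainFromTo T U m d → n = m

/-- The extension `R ⊆ S` has FCP: every chain of `R`-subalgebras of `S` is finite. -/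
def IsFCPExt (R S : Type*) [CommRing R] [CommRing S] [Algebra R S] : Prop :=
  ∀ C : Set (Subalgebra R S), IsChain (· ≤ ·) C → C.Finite

/-- The extension `R ⊆ S` is catenarian. -/
def IsCatenarianExt (R S : Type*) [CommRing R] [CommRing S] [Algebra R S] : Prop :=
  IsCatenarianFromTo (⊥ : Subalgebra R S) ⊤

/-- The length `ℓ[T,U]`: the supremum of lengths of chains from `T` to `U`. -/
noncomputable def extLength {α : Type*} [PartialOrder α] (T U : α) : ℕ :=
  sSup {n | ∃ c : Fin (n + 1) → α, StrictMono c ∧ c 0 = T ∧ c (Fin.last n) = U}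

/-- The conductor `(R:S)`: the largest ideal of `S` contained in `R`. -/
def conductorIdeal (R S : Type*) [CommRing R] [CommRing S] [Algebra R S] : Ideal S where
  carrier := {s : S | ∀ t : S, s * t ∈ (algebraMap R S).range}
  add_mem' := fun ha hb t => by
    rw [add_mul]; exact add_mem (ha t) (hb t)
  zero_mem' := fun t => by rw [zero_mul]; exact zero_mem _
  smul_mem' := fun c s hs t => by
    simpa [smul_eq_mul, mul_comm, mul_assoc, mul_left_comm] using hs (c * t)

/-- The extension `R ⊆ S` is t-closed. -/
def IsTClosedExt (R S : Type*) [CommRing R] [CommRing S] [Algebra R S] : Prop :=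
  ∀ (b : S) (r : R),
    b ^ 2 - algebraMap R S r * b ∈ (algebraMap R S).range →
    b ^ 3 - algebraMap R S r * b ^ 2 ∈ (algebraMap R S).range →
    b ∈ (algebraMap R S).range

/-- `S/R` as an `R`-module. -/
abbrev extQuot (R S : Type*) [CommRing R] [CommRing S] [Algebra R S] :=
  S ⧸ LinearMap.range (Algebra.linearMap R S)

lemma wellFoundedGT_of_finite_chains {α : Type*} [PartialOrder α]
    (h : ∀ C : Set α, IsChain (· ≤ ·) C → C.Finite) : WellFoundedGT α where
  wf := RelEmbedding.wellFounded_iff_isEmpty.2 ⟨fun f => by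
    have hf : StrictMono f := fun _ _ => f.map_rel_iff.2
    exact Set.infinite_range_of_injective f.injective (h _ hf.monotone.isChain_range)⟩

lemma isArtinian_of_forall_ideal_smul_eq {R M : Type*} [CommRing R] [AddCommGroup M] [Module R M]
    {N : Submodule R M} (hfg : N.FG)
    (h : ∀ I : Ideal R, I • N = ⊥ ∨ I • N = N) : IsArtinian R N := by
  rcases eq_or_ne N ⊥ with rfl | hN
  · infer_instance
  obtain ⟨m, hm, hle⟩ := Ideal.exists_le_maximal N.annihilator
    (mt Submodule.annihilator_eq_top_iff.1 hN)
  rcases h m with hbot | heq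
  · have htors : Module.IsTorsionBySet R N m := fun x a =>
      Subtype.ext (hbot.le (Submodule.smul_mem_smul a.2 x.2))
    have : Module.Finite R N := .of_fg hfg
    let := htors.module
    let : Field (R ⧸ m) := Ideal.Quotient.field m
    have : IsSemisimpleModule R N := htors.isSemisimpleModule_iff.1 inferInstance
    infer_instance
  · obtain ⟨r, hr, hrN⟩ :=
      Submodule.exists_sub_one_mem_and_smul_eq_zero_of_fg_of_le_smul m N hfg heq.ge
    have hrm : r ∈ m := hle (Submodule.mem_annihilator.2 hrN)
    exact absurd (by simpa using m.sub_mem hrm hr) ((Ideal.ne_top_iff_one m).1 hm.ne_top)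

lemma isArtinian_linearMap {R M N : Type*} [CommRing R] [AddCommGroup M] [Module R M]
    [AddCommGroup N] [Module R N] [Module.Finite R M] [IsArtinian R N] :
    IsArtinian R (M →ₗ[R] N) := by
  obtain ⟨n, f, hf⟩ := Module.Finite.exists_fin' R M
  have : IsArtinian R ((Fin n → R) →ₗ[R] N) :=
    isArtinian_of_linearEquiv ((Pi.basisFun R (Fin n)).constr R)
  exact isArtinian_of_injective (f.lcomp R N) (LinearMap.lcomp_injective_of_surjective f hf)

lemma isArtinianRing_quotient_annihilator {R M : Type*} [CommRing R] [AddCommGroup M] [Module R M]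
    [Module.Finite R M] [IsArtinian R M] : IsArtinianRing (R ⧸ Module.annihilator R M) := by
  have hker : LinearMap.ker (LinearMap.lsmul R M) = Module.annihilator R M := by
    ext r
    simp [Module.mem_annihilator, LinearMap.ext_iff]
  have := isArtinian_linearMap (R := R) (M := M) (N := M)
  have : IsArtinian R (R ⧸ Module.annihilator R M) := by
    rw [← hker]
    exact isArtinian_of_injective _
      (LinearMap.ker_eq_bot.1 (Submodule.ker_liftQ_eq_bot' _ (LinearMap.lsmul R M) rfl))
  exact isArtinian_of_tower R this

section

variable {R : Type*} [CommRing R] (I : Ideal R)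

lemma zeroLocus_eq_range_comap_mk :
    PrimeSpectrum.zeroLocus (I : Set R) =
      Set.range (PrimeSpectrum.comap (Ideal.Quotient.mk I)) := by
  rw [range_comap_of_surjective _ _ Ideal.Quotient.mk_surjective, Ideal.mk_ker]

variable [IsArtinianRing (R ⧸ I)]

lemma finite_zeroLocus_of_isArtinianRing_quotient :
    (PrimeSpectrum.zeroLocus (I : Set R)).Finite := by
  rw [zeroLocus_eq_range_comap_mk]
  exact Set.finite_range _

lemma isMaximal_of_mem_zeroLocus_of_isArtinianRing_quotient {p : PrimeSpectrum R}
    (hp : p ∈ PrimeSpectrum.zeroLocus (I : Set R)) : p.asIdeal.IsMaximal := by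
  rw [zeroLocus_eq_range_comap_mk] at hp
  obtain ⟨q, rfl⟩ := hp
  exact Ideal.comap_isMaximal_of_surjective _ Ideal.Quotient.mk_surjective

end

section

variable {R S : Type*} [CommRing R] [CommRing S] [Algebra R S]

lemma IsFCPExt.wellFoundedGT (h : IsFCPExt R S) : WellFoundedGT (Subalgebra R S) :=
  wellFoundedGT_of_finite_chains h

lemma IsFCPExt.wellFoundedLT (h : IsFCPExt R S) : WellFoundedLT (Subalgebra R S) :=
  have := wellFoundedGT_of_finite_chains (α := (Subalgebra R S)ᵒᵈ) fun C hC => h C hC.symm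
  inferInstanceAs (WellFoundedLT (Subalgebra R S)ᵒᵈᵒᵈ)

lemma subalgebra_fg_of_wellFoundedGT [WellFoundedGT (Subalgebra R S)] (T : Subalgebra R S) :
    T.FG := by
  obtain ⟨s, hs, hsup⟩ := CompleteLattice.WellFoundedGT.isSupFiniteCompact (Subalgebra R S)
    ((fun x => Algebra.adjoin R {x}) '' T)
  have hT : sSup ((fun x => Algebra.adjoin R {x}) '' T) = T := by
    rw [sSup_image]
    exact le_antisymm (iSup₂_le fun x hx => Algebra.adjoin_singleton_le hx) fun x hx =>
      le_iSup₂ (f := fun x (_ : x ∈ T) => Algebra.adjoin R {x}) x hx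
        (Algebra.self_mem_adjoin_singleton R x)
  rw [← hT, hsup]
  refine Finset.sup_induction Subalgebra.fg_bot (fun _ h₁ _ h₂ => h₁.sup h₂) fun U hU => ?_
  obtain ⟨x, -, rfl⟩ := hs hU
  exact ⟨{x}, by simp⟩

lemma toSubmodule_fg_of_fg [Algebra.IsIntegral R S] {T : Subalgebra R S} (hT : T.FG) :
    (Subalgebra.toSubmodule T).FG := by
  obtain ⟨s, rfl⟩ := hT
  exact fg_adjoin_of_finite s.finite_toSet fun x _ => Algebra.IsIntegral.isIntegral x

lemma IsFCPExt.moduleFinite (h : IsFCPExt R S) [Algebra.IsIntegral R S] : Module.Finite R S :=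
  have := h.wellFoundedGT
  ⟨toSubmodule_fg_of_fg (subalgebra_fg_of_wellFoundedGT ⊤)⟩

lemma mul_mem_ideal_smul_toSubmodule {U : Subalgebra R S} {I : Ideal R} {u a : S} (hu : u ∈ U)
    (ha : a ∈ I • Subalgebra.toSubmodule U) : u * a ∈ I • Subalgebra.toSubmodule U := by
  refine Submodule.smul_induction_on ha (fun r hr v hv => ?_) fun a b ha hb => ?_
  · rw [mul_smul_comm]
    exact Submodule.smul_mem_smul hr (U.mul_mem hu hv)
  · rw [mul_add]
    exact add_mem ha hb

/-- The subalgebra `T + IU` of `U`, for an ideal `I` of the base ring and algebras `T ≤ U`. It turns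
the covering relation `T ⋖ U` into a statement about the module `U/T`. -/
def supIdealSMul {T U : Subalgebra R S} (h : T ≤ U) (I : Ideal R) : Subalgebra R S :=
  (Subalgebra.toSubmodule T ⊔ I • Subalgebra.toSubmodule U).toSubalgebra
    (Submodule.mem_sup_left T.one_mem) fun x y hx hy => by
      obtain ⟨t, ht, a, ha, rfl⟩ := Submodule.mem_sup.1 hx
      obtain ⟨t', ht', a', ha', rfl⟩ := Submodule.mem_sup.1 hy
      have hU : t' + a' ∈ U := U.add_mem (h ht') (Submodule.smul_le_right ha')
      rw [show (t + a) * (t' + a') = t * t' + (t * a' + (t' + a') * a) by ring]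
      exact Submodule.add_mem_sup (T.mul_mem ht ht') (add_mem
        (mul_mem_ideal_smul_toSubmodule (h ht) ha') (mul_mem_ideal_smul_toSubmodule hU ha))

lemma toSubmodule_supIdealSMul {T U : Subalgebra R S} (h : T ≤ U) (I : Ideal R) :
    Subalgebra.toSubmodule (supIdealSMul h I) =
      Subalgebra.toSubmodule T ⊔ I • Subalgebra.toSubmodule U := rfl

lemma le_supIdealSMul {T U : Subalgebra R S} (h : T ≤ U) (I : Ideal R) : T ≤ supIdealSMul h I :=
  fun _ hx => Submodule.mem_sup_left hx

lemma supIdealSMul_le {T U : Subalgebra R S} (h : T ≤ U) (I : Ideal R) : supIdealSMul h I ≤ U := by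
  rw [← Subalgebra.toSubmodule.le_iff_le, toSubmodule_supIdealSMul]
  exact sup_le h Submodule.smul_le_right

lemma isArtinian_map_mkQ_of_covBy {T U : Subalgebra R S} (h : T ⋖ U)
    (hU : (Subalgebra.toSubmodule U).FG) :
    IsArtinian R ((Subalgebra.toSubmodule U).map (Subalgebra.toSubmodule T).mkQ) := by
  refine isArtinian_of_forall_ideal_smul_eq (hU.map _) fun I => ?_
  have hsmul : I • (Subalgebra.toSubmodule U).map (Subalgebra.toSubmodule T).mkQ =
      (Subalgebra.toSubmodule (supIdealSMul h.le I)).map (Subalgebra.toSubmodule T).mkQ := by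
    rw [toSubmodule_supIdealSMul, Submodule.map_sup, Submodule.mkQ_map_self, bot_sup_eq,
      Submodule.map_smul'']
  rw [hsmul]
  rcases h.eq_or_eq (le_supIdealSMul h.le I) (supIdealSMul_le h.le I) with heq | heq
  · exact .inl (by rw [heq, Submodule.mkQ_map_self])
  · exact .inr (by rw [heq])

lemma isArtinian_quotient_subalgebra [WellFoundedLT (Subalgebra R S)]
    [WellFoundedGT (Subalgebra R S)] [Algebra.IsIntegral R S] (T : Subalgebra R S) :
    IsArtinian R (S ⧸ Subalgebra.toSubmodule T) := by
  induction T using WellFoundedGT.induction with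
  | ind T ih =>
    rcases eq_or_ne T ⊤ with rfl | hT
    · rw [Algebra.top_toSubmodule]
      infer_instance
    obtain ⟨U, hTU, -⟩ := exists_covBy_le_of_lt hT.lt_top
    have := ih U hTU.lt
    rw [isArtinian_iff_submodule_quotient
      ((Subalgebra.toSubmodule U).map (Subalgebra.toSubmodule T).mkQ)]
    have hU := toSubmodule_fg_of_fg (subalgebra_fg_of_wellFoundedGT U)
    exact ⟨isArtinian_map_mkQ_of_covBy hTU hU,
      isArtinian_of_linearEquiv (Submodule.quotientQuotientEquivQuotient
        (Subalgebra.toSubmodule T) (Subalgebra.toSubmodule U) hTU.le).symm⟩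

lemma conductor_comap_eq_annihilator :
    (conductorIdeal R S).comap (algebraMap R S) = Module.annihilator R (extQuot R S) := by
  ext a
  rw [Module.mem_annihilator, (Submodule.Quotient.mk_surjective _).forall]
  refine forall_congr' fun s => ?_
  rw [← Submodule.Quotient.mk_smul, Submodule.Quotient.mk_eq_zero, Algebra.smul_def]
  rfl

lemma mem_range_of_mem_conductor {x : S} (hx : x ∈ conductorIdeal R S) :
    x ∈ (algebraMap R S).range := by
  simpa using hx 1

lemma IsFCPExt.isArtinianRing_quotient_conductor_comap (h : IsFCPExt R S)
    [Algebra.IsIntegral R S] :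
    IsArtinianRing (R ⧸ (conductorIdeal R S).comap (algebraMap R S)) := by
  have := h.wellFoundedLT
  have := h.wellFoundedGT
  have := h.moduleFinite
  have : IsArtinian R (extQuot R S) := isArtinian_quotient_subalgebra ⊥
  rw [conductor_comap_eq_annihilator]
  exact isArtinianRing_quotient_annihilator

lemma IsTClosedExt.mem_conductor_of_sq (h : IsTClosedExt R S) {b : S}
    (hb : b ^ 2 ∈ conductorIdeal R S) : b ∈ conductorIdeal R S := fun t => by
  refine h (b * t) 0 ?_ ?_
  · convert hb (t ^ 2) using 1
    simp only [map_zero]; ring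
  · convert hb (b * t ^ 3) using 1
    simp only [map_zero]; ring

lemma IsTClosedExt.isReduced_quotient_conductor (h : IsTClosedExt R S) :
    IsReduced (S ⧸ conductorIdeal R S) := by
  refine (isReduced_iff_pow_one_lt 2 one_lt_two).2 fun x hx => ?_
  obtain ⟨b, rfl⟩ := Ideal.Quotient.mk_surjective x
  rw [← map_pow, Ideal.Quotient.eq_zero_iff_mem] at hx
  exact Ideal.Quotient.eq_zero_iff_mem.2 (h.mem_conductor_of_sq hx)

lemma IsTClosedExt.mem_range_of_isIdempotentElem (h : IsTClosedExt R S) {b : S}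
    (hb : IsIdempotentElem (Ideal.Quotient.mk (conductorIdeal R S) b)) :
    b ∈ (algebraMap R S).range := by
  have hI : b ^ 2 - b ∈ conductorIdeal R S := by
    rw [← Ideal.Quotient.mk_eq_mk_iff_sub_mem, map_pow, pow_two, hb.eq]
  refine h b 1 ?_ ?_
  · simpa using mem_range_of_mem_conductor hI
  · convert hI b using 1
    rw [map_one]
    ring

lemma conductor_le_map_comap {J : Ideal S} (hJ : conductorIdeal R S ≤ J) :
    conductorIdeal R S ≤ (J.comap (algebraMap R S)).map (algebraMap R S) := fun x hx => by
  obtain ⟨r, rfl⟩ := mem_range_of_mem_conductor hx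
  exact Ideal.mem_map_of_mem _ (hJ hx)

lemma IsTClosedExt.map_comap_eq_of_conductor_le (h : IsTClosedExt R S)
    [IsArtinianRing (S ⧸ conductorIdeal R S)] {J : Ideal S} (hJ : conductorIdeal R S ≤ J) :
    (J.comap (algebraMap R S)).map (algebraMap R S) = J := by
  refine Ideal.map_comap_le.antisymm fun x hx => ?_
  have := h.isReduced_quotient_conductor
  have := IsArtinianRing.isSemisimpleRing_of_isReduced (S ⧸ conductorIdeal R S)
  obtain ⟨e, he, hspan⟩ := IsSemisimpleRing.ideal_eq_span_idempotent
    (J.map (Ideal.Quotient.mk (conductorIdeal R S)))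
  obtain ⟨b, rfl⟩ := Ideal.Quotient.mk_surjective e
  obtain ⟨r, rfl⟩ := h.mem_range_of_isIdempotentElem he
  have hr : r ∈ J.comap (algebraMap R S) := by
    have hb : algebraMap R S r ∈
        (J.map (Ideal.Quotient.mk (conductorIdeal R S))).comap (Ideal.Quotient.mk _) := by
      rw [hspan]
      exact Ideal.mem_span_singleton_self _
    rwa [Ideal.comap_map_quotientMk, sup_eq_right.2 hJ] at hb
  have hx' := Ideal.mem_map_of_mem (Ideal.Quotient.mk (conductorIdeal R S)) hx
  rw [hspan] at hx'
  obtain ⟨y, hy⟩ := Ideal.mem_span_singleton'.1 hx'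
  obtain ⟨s, rfl⟩ := Ideal.Quotient.mk_surjective y
  rw [← map_mul, eq_comm, Ideal.Quotient.mk_eq_mk_iff_sub_mem] at hy
  rw [← sub_add_cancel x (s * algebraMap R S r)]
  exact add_mem (conductor_le_map_comap hJ hy) (Ideal.mul_mem_left _ _ (Ideal.mem_map_of_mem _ hr))

lemma isArtinianRing_quotient_of_comap (J : Ideal S) [Module.Finite R S]
    [IsArtinianRing (R ⧸ J.comap (algebraMap R S))] : IsArtinianRing (S ⧸ J) := by
  have : Module.Finite (R ⧸ J.comap (algebraMap R S)) (S ⧸ J) :=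
    Module.Finite.of_restrictScalars_finite R _ _
  exact IsArtinianRing.of_finite (R ⧸ J.comap (algebraMap R S)) _

theorem stmt_13_general (hFCP : IsFCPExt R S) (hint : Algebra.IsIntegral R S)
    (htcl : IsTClosedExt R S) :
    PrimeSpectrum.zeroLocus
        (((conductorIdeal R S).comap (algebraMap R S) : Ideal R) : Set R) =
      {p : PrimeSpectrum R | p.asIdeal.IsMaximal ∧ p ∈ Module.support R (extQuot R S)} ∧
    (PrimeSpectrum.zeroLocus
        (((conductorIdeal R S).comap (algebraMap R S) : Ideal R) : Set R)).Finite ∧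
    ∀ J : Ideal S, conductorIdeal R S ≤ J →
      J = Ideal.map (algebraMap R S) (J.comap (algebraMap R S)) := by
  have := hFCP.moduleFinite
  have := hFCP.isArtinianRing_quotient_conductor_comap
  have := isArtinianRing_quotient_of_comap (R := R) (conductorIdeal R S)
  refine ⟨Set.ext fun p => ?_, finite_zeroLocus_of_isArtinianRing_quotient _,
    fun J hJ => (htcl.map_comap_eq_of_conductor_le hJ).symm⟩
  rw [Set.mem_ofPred_eq, Module.support_eq_zeroLocus, ← conductor_comap_eq_annihilator]
  exact (and_iff_right_of_imp (isMaximal_of_mem_zeroLocus_of_isArtinianRing_quotient _)).symm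

end

/-- For an integral t-closed FCP extension `R ⊂ S` with conductor
`I := (R:S)`, the set `V_R(I)` equals `MSupp(S/R)` and is finite; moreover every
prime `Q` of `S` containing `I` satisfies `Q = PS` where `P := Q ∩ R`. -/
theorem stmt_13 {R S : Type*} [CommRing R] [CommRing S] [Algebra R S]
    (hinj : Function.Injective (algebraMap R S))
    (hproper : ¬Function.Surjective (algebraMap R S))
    (hFCP : IsFCPExt R S) (hint : Algebra.IsIntegral R S)
    (htcl : IsTClosedExt R S) :
    PrimeSpectrum.zeroLocus
        (((conductorIdeal R S).comap (algebraMap R S) : Ideal R) : Set R) =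
      {p : PrimeSpectrum R | p.asIdeal.IsMaximal ∧ p ∈ Module.support R (extQuot R S)} ∧
    (PrimeSpectrum.zeroLocus
        (((conductorIdeal R S).comap (algebraMap R S) : Ideal R) : Set R)).Finite ∧
    ∀ Q : Ideal S, Q.IsPrime → conductorIdeal R S ≤ Q →
      Q = Ideal.map (algebraMap R S) (Q.comap (algebraMap R S)) := by
  obtain ⟨hsupp, hfin, hmap⟩ := stmt_13_general hFCP hint htcl
  exact ⟨hsupp, hfin, fun Q _ hQ => hmap Q hQ⟩
end

section
/- Let R ⊆ S be an integral FCP ring extension and let T ∈ [R,S] be the t-closure of R in S (i.e., R ⊆ T is infra-integral and T ⊆ S is t-closed). If T ⊆ S is catenarian and [R,S] = [R,T] ∪ [T,S], then R ⊆ S is catenarian. -/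
/-- The residual extension `κ_R(P) → κ_S(Q)` (for `P = Q ∩ R`) is an isomorphism. -/
def ResidualExtIsIso {R S : Type*} [CommRing R] [CommRing S] (f : R →+* S)
    (Q : Ideal S) [Q.IsPrime] : Prop :=
  Function.Bijective
    (IsLocalRing.ResidueField.map
      (Localization.localRingHom (Q.comap f) Q f rfl))

/-- `R ⊆ S` is infra-integral: it is integral and all residual extensions
are isomorphisms. -/
def IsInfraIntegral (R S : Type*) [CommRing R] [CommRing S] [Algebra R S] : Prop :=
  Algebra.IsIntegral R S ∧
    ∀ (Q : Ideal S) (_ : Q.IsPrime), ResidualExtIsIso (algebraMap R S) Q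

/-- The subextension `T ⊆ S` is t-closed. -/
def IsTClosedIn {R S : Type*} [CommRing R] [CommRing S] [Algebra R S]
    (T : Subalgebra R S) : Prop :=
  ∀ (b : S), ∀ r ∈ T, b ^ 2 - r * b ∈ T → b ^ 3 - r * b ^ 2 ∈ T → b ∈ T

/-- `T` is the t-closure of `R` in `S`: `R ⊆ T` is infra-integral and `T ⊆ S`
is t-closed. -/
def IsTClosure {R S : Type*} [CommRing R] [CommRing S] [Algebra R S]
    (T : Subalgebra R S) : Prop :=
  IsInfraIntegral R T ∧ IsTClosedIn T

/-!
Trivial residue fields turn a minimal integral extension of algebras into a minimal extension of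
modules. Let `A ⋖ B` be a covering of `R`-algebras with `B` integral over `R`, and suppose that `R`
surjects onto `B ⧸ Q` for every maximal ideal `Q` of `B`. An ideal of `B` not contained in `A`
generates `B` together with `A`. Applied to `M B`, where `M` annihilates a simple quotient of the
`A`-module `B ⧸ A`, this gives `M B ⊆ A`. A maximal ideal `N ⊇ M B` of `B` satisfies `A ∩ N = M B`
and `A + N = B`, and by the modular law no ideal lies strictly between `M B` and `N`. So `N ⧸ M B`
is a simple `B`-module, hence a simple `R`-module, and it is isomorphic to `B ⧸ A`.

Therefore the maximal chains of algebras below the t-closure `T` are composition series of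
`R`-modules, and Jordan–Hölder fixes their length. A maximal chain from `⊥` to `⊤` all of whose
members are comparable with `T` passes through `T`, so its length is a sum of two fixed lengths.
-/

section MaximalChains

variable {α β : Type*} [PartialOrder α] [PartialOrder β] {a b x : α} {n : ℕ}
  {c : Fin (n + 1) → α}

lemma IsMaxChainFromTo.monotone (hc : IsMaxChainFromTo a b n c) : Monotone c :=
  Fin.monotone_iff_le_succ.2 fun i => (hc.2.2 i).le

lemma IsMaxChainFromTo.left_le (hc : IsMaxChainFromTo a b n c) (i : Fin (n + 1)) : a ≤ c i :=
  hc.1 ▸ hc.monotone (Fin.zero_le i)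

lemma IsMaxChainFromTo.le_right (hc : IsMaxChainFromTo a b n c) (i : Fin (n + 1)) : c i ≤ b :=
  hc.2.1 ▸ hc.monotone (Fin.le_last i)

lemma IsMaxChainFromTo.take (hc : IsMaxChainFromTo a b n c) (k : Fin (n + 1)) :
    IsMaxChainFromTo a (c k) k fun i => c (i.castLE k.isLt) :=
  ⟨hc.1, rfl, fun i => hc.2.2 (i.castLE k.is_le)⟩

lemma IsMaxChainFromTo.drop (hc : IsMaxChainFromTo a b n c) (k : Fin (n + 1)) :
    IsMaxChainFromTo (c k) b (n - k) fun i => c ⟨k + i, by omega⟩ := by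
  refine ⟨rfl, ?_, fun i => hc.2.2 ⟨k + i, by omega⟩⟩
  rw [← hc.2.1]
  exact congrArg c (Fin.ext (Nat.add_sub_cancel' k.is_le))

lemma IsMaxChainFromTo.exists_apply_eq (hc : IsMaxChainFromTo a b n c) (hax : a ≤ x) (hxb : x ≤ b)
    (hx : ∀ i, c i ≤ x ∨ x ≤ c i) : ∃ k, c k = x := by
  by_contra! hne
  have hle (i : Fin (n + 1)) : c i ≤ x := by
    induction i using Fin.induction with
    | zero => exact hc.1 ▸ hax
    | succ i ih =>
      refine (hx i.succ).resolve_right fun hxi => ?_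
      rcases (hc.2.2 i).eq_or_eq ih hxi with h | h
      exacts [hne _ h.symm, hne _ h.symm]
  exact hne (Fin.last n) ((hle _).antisymm (hc.2.1 ▸ hxb))

lemma IsCatenarianFromTo.trans (hlow : IsCatenarianFromTo a x) (hupp : IsCatenarianFromTo x b)
    (hax : a ≤ x) (hxb : x ≤ b) (hx : ∀ y ∈ Set.Icc a b, y ≤ x ∨ x ≤ y) :
    IsCatenarianFromTo a b := by
  intro n m c d hc hd
  obtain ⟨k, hk⟩ := hc.exists_apply_eq hax hxb fun i => hx _ ⟨hc.left_le i, hc.le_right i⟩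
  obtain ⟨l, hl⟩ := hd.exists_apply_eq hax hxb fun i => hx _ ⟨hd.left_le i, hd.le_right i⟩
  have hkl : (k : ℕ) = l := hlow _ _ _ _ (hk ▸ hc.take k) (hl ▸ hd.take l)
  have hsub : n - k = m - l := hupp _ _ _ _ (hk ▸ hc.drop k) (hl ▸ hd.drop l)
  omega

lemma IsCatenarianFromTo.of_map {f : α → β} (hfab : IsCatenarianFromTo (f a) (f b))
    (hf : ∀ x y, y ≤ b → x ⋖ y → f x ⋖ f y) : IsCatenarianFromTo a b := by
  have hmap {n : ℕ} {c : Fin (n + 1) → α} (hc : IsMaxChainFromTo a b n c) :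
      IsMaxChainFromTo (f a) (f b) n (f ∘ c) :=
    ⟨congrArg f hc.1, congrArg f hc.2.1, fun i => hf _ _ (hc.le_right _) (hc.2.2 i)⟩
  exact fun n m c d hc hd => hfab n m _ _ (hmap hc) (hmap hd)

lemma isCatenarianFromTo_of_isModularLattice {L : Type*} [Lattice L] [IsModularLattice L]
    (a b : L) : IsCatenarianFromTo a b := by
  intro n m c d hc hd
  let s : CompositionSeries L := ⟨n, c, hc.2.2⟩
  let t : CompositionSeries L := ⟨m, d, hd.2.2⟩
  have hst : s.Equivalent t :=
    CompositionSeries.jordan_holder s t (hc.1.trans hd.1.symm) (hc.2.1.trans hd.2.1.symm)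
  exact hst.length_eq

end MaximalChains

section TrivialResidueFields

/-- The structure map of the `R`-algebra `B` induces isomorphisms on the residue fields at all
maximal ideals `Q` of `B`. Injectivity of `R ⧸ (Q ∩ R) → B ⧸ Q` is automatic, so this is encoded
as surjectivity of `R → B ⧸ Q`. -/
def HasTrivialResidueFields (R B : Type*) [CommRing R] [CommRing B] [Algebra R B] : Prop :=
  ∀ Q : Ideal B, Q.IsMaximal → Function.Surjective (algebraMap R (B ⧸ Q))

variable {R B : Type*} [CommRing R] [CommRing B] [Algebra R B]

lemma HasTrivialResidueFields.isSimpleModule (hres : HasTrivialResidueFields R B)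
    (V : Type*) [AddCommGroup V] [Module B V] [Module R V] [IsScalarTower R B V]
    [IsSimpleModule B V] : IsSimpleModule R V := by
  obtain ⟨Q, hQ, ⟨e⟩⟩ := isSimpleModule_iff_quot_maximal.1 ‹IsSimpleModule B V›
  have : IsSimpleModule R (B ⧸ Q) := by
    rw [isSimpleModule_iff_isSimpleModule_of_algebraMap_surjective (hres Q hQ),
      ← isSimpleModule_iff_isSimpleModule_of_algebraMap_surjective (R := B)
        Ideal.Quotient.mk_surjective]
    exact isSimpleModule_iff_isCoatom.2 hQ.out
  exact IsSimpleModule.congr (e.restrictScalars R)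

lemma HasTrivialResidueFields.covBy_restrictScalars (hres : HasTrivialResidueFields R B)
    {V : Type*} [AddCommGroup V] [Module B V] [Module R V] [IsScalarTower R B V]
    {K L : Submodule B V} (hKL : K ⋖ L) : K.restrictScalars R ⋖ L.restrictScalars R := by
  have := (covBy_iff_quot_is_simple hKL.le).1 hKL
  rw [covBy_iff_quot_is_simple (Submodule.restrictScalars_mono R hKL.le)]
  have := hres.isSimpleModule (L ⧸ K.comap L.subtype)
  exact IsSimpleModule.congr
    (Submodule.Quotient.restrictScalarsEquiv R (K.comap L.subtype))

lemma HasTrivialResidueFields.tower_bot {T : Type*} [CommRing T] [Algebra R T] [Algebra B T]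
    [IsScalarTower R B T] [FaithfulSMul B T] [Algebra.IsIntegral B T]
    (hres : HasTrivialResidueFields R T) : HasTrivialResidueFields R B := by
  intro P hP
  obtain ⟨Q, hQ, _⟩ := Ideal.exists_maximal_ideal_liesOver_of_isIntegral (S := T) P
  refine Function.Surjective.of_comp_left (f := algebraMap (B ⧸ P) (T ⧸ Q)) ?_
    (FaithfulSMul.algebraMap_injective (B ⧸ P) (T ⧸ Q))
  rw [← RingHom.coe_comp, ← IsScalarTower.algebraMap_eq]
  exact hres Q hQ

lemma algebraMap_quotient_surjective_of_residualExtIsIso (Q : Ideal B) [Q.IsPrime]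
    [(Q.comap (algebraMap R B)).IsMaximal] (hQ : ResidualExtIsIso (algebraMap R B) Q) :
    Function.Surjective (algebraMap R (B ⧸ Q)) := by
  intro y
  obtain ⟨z, hz⟩ := hQ.2 (algebraMap (B ⧸ Q) Q.ResidueField y)
  obtain ⟨r, rfl⟩ := Ideal.algebraMap_residueField_surjective _ z
  refine ⟨r, Q.injective_algebraMap_quotient_residueField ?_⟩
  rw [← hz]
  change _ = IsLocalRing.ResidueField.map _ (IsLocalRing.residue _ (algebraMap R _ r))
  rw [IsLocalRing.ResidueField.map_residue, Localization.localRingHom_to_map]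
  rfl

lemma IsInfraIntegral.hasTrivialResidueFields (h : IsInfraIntegral R B) :
    HasTrivialResidueFields R B := by
  intro Q hQ
  have := h.1
  have := Ideal.isMaximal_comap_of_isIntegral_of_isMaximal (R := R) Q
  exact algebraMap_quotient_surjective_of_residualExtIsIso Q (h.2 Q hQ.isPrime)

end TrivialResidueFields

section CoatomsOfSubalgebras

variable {R B : Type*} [CommRing R] [CommRing B] [Algebra R B] {A : Subalgebra R B}

open Subalgebra (toSubmodule)

lemma module_finite_of_isCoatom [Algebra.IsIntegral R B] (hA : IsCoatom A) : Module.Finite A B := by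
  obtain ⟨b, -, hb⟩ := SetLike.exists_of_lt hA.lt_top
  have hlt : A < (Algebra.adjoin A {b}).restrictScalars R :=
    SetLike.lt_iff_le_and_exists.2 ⟨fun a ha => (Algebra.adjoin A {b}).algebraMap_mem ⟨a, ha⟩,
      b, Algebra.self_mem_adjoin_singleton A b, hb⟩
  have hadjoin : Algebra.adjoin A {b} = ⊤ := Subalgebra.restrictScalars_injective R <| by
    rw [hA.2 _ hlt, Subalgebra.restrictScalars_top]
  have : Algebra.IsIntegral A B := .tower_top R
  have : Algebra.FiniteType A B := ⟨⟨{b}, by rw [Finset.coe_singleton, hadjoin]⟩⟩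
  exact Algebra.IsIntegral.finite

lemma toSubmodule_sup_ideal_eq_top (hA : IsCoatom A) {I : Ideal B}
    (hI : ¬ I.restrictScalars R ≤ toSubmodule A) :
    toSubmodule A ⊔ I.restrictScalars R = ⊤ := by
  let C : Subalgebra R B := (A.map (Ideal.Quotient.mkₐ R I)).comap (Ideal.Quotient.mkₐ R I)
  have hC : toSubmodule C = toSubmodule A ⊔ I.restrictScalars R := by
    have hker : (Ideal.Quotient.mkₐ R I).toLinearMap.ker = I.restrictScalars R := by
      ext; simp [Ideal.Quotient.eq_zero_iff_mem]
    rw [← hker]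
    exact Submodule.comap_map_eq (Ideal.Quotient.mkₐ R I).toLinearMap (toSubmodule A)
  have hAC : A < C := by
    rw [← Subalgebra.toSubmodule.lt_iff_lt, hC]
    exact left_lt_sup.2 hI
  rw [← hC, hA.2 C hAC, Algebra.top_toSubmodule]

/-- `M` is the crucial maximal ideal of the minimal extension `A ⊂ B`. -/
lemma exists_isMaximal_map_le [Module.Finite A B] (hA : IsCoatom A) :
    ∃ M : Ideal A, M.IsMaximal ∧
      (M.map (algebraMap A B)).restrictScalars R ≤ toSubmodule A := by
  have hne : (1 : Submodule A B) ≠ ⊤ := fun h => hA.1 <| eq_top_iff.2 fun x _ => by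
    obtain ⟨a, rfl⟩ := Submodule.mem_one.1 (h ▸ Submodule.mem_top : x ∈ (1 : Submodule A B))
    exact a.2
  obtain ⟨W, hW, hAW⟩ := (eq_top_or_exists_le_coatom (1 : Submodule A B)).resolve_left hne
  have : IsSimpleModule A (B ⧸ W) := isSimpleModule_iff_isCoatom.2 hW
  refine ⟨Module.annihilator A (B ⧸ W), IsSimpleModule.annihilator_isMaximal, ?_⟩
  set M := Module.annihilator A (B ⧸ W)
  have hMW : (M.map (algebraMap A B)).restrictScalars A ≤ W := by
    rw [← Ideal.smul_top_eq_map, Submodule.smul_le]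
    intro a ha b _
    rw [← Submodule.Quotient.mk_eq_zero, Submodule.Quotient.mk_smul]
    exact Module.mem_annihilator.1 ha _
  by_contra hMA
  have hsup := toSubmodule_sup_ideal_eq_top hA hMA
  refine hW.1 (eq_top_iff.2 fun b _ => ?_)
  obtain ⟨a, ha, i, hi, rfl⟩ := Submodule.mem_sup.1 (hsup ▸ Submodule.mem_top : b ∈ _)
  exact W.add_mem (hAW (Submodule.mem_one.2 ⟨⟨a, ha⟩, rfl⟩)) (hMW hi)

lemma exists_isMaximal_toSubmodule_inf_eq [Module.Finite A B] (hA : IsCoatom A) :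
    ∃ I N : Ideal B, N.IsMaximal ∧
      toSubmodule A ⊓ N.restrictScalars R = I.restrictScalars R := by
  obtain ⟨M, hM, hMA⟩ := exists_isMaximal_map_le hA
  have hne : M.map (algebraMap A B) ≠ ⊤ := fun h =>
    hA.1 (Algebra.toSubmodule_eq_top.1 (top_le_iff.1 (by simpa [h] using hMA)))
  obtain ⟨N, hN, hMN⟩ := Ideal.exists_le_maximal _ hne
  have hcomap : M = N.comap (algebraMap A B) :=
    hM.eq_of_le (Ideal.comap_ne_top _ hN.ne_top) (Ideal.map_le_iff_le_comap.1 hMN)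
  refine ⟨M.map (algebraMap A B), N, hN, le_antisymm ?_ (le_inf hMA hMN)⟩
  rintro a ⟨haA, haN⟩
  exact Ideal.mem_map_of_mem (algebraMap A B) (hcomap ▸ haN : (⟨a, haA⟩ : A) ∈ M)

lemma toSubmodule_sup_ideal_eq_top_of_surjective (A : Subalgebra R B) {N : Ideal B}
    (hN : Function.Surjective (algebraMap R (B ⧸ N))) :
    toSubmodule A ⊔ N.restrictScalars R = ⊤ := by
  refine eq_top_iff.2 fun b _ => ?_
  obtain ⟨r, hr⟩ := hN (Ideal.Quotient.mk N b)
  have hbr : b - algebraMap R B r ∈ N := Ideal.Quotient.eq.1 hr.symm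
  exact Submodule.mem_sup.2 ⟨_, A.algebraMap_mem r, _, hbr, add_sub_cancel _ _⟩

lemma covBy_of_toSubmodule_inf_eq_of_sup_eq_top (hA : IsCoatom A) {I N : Ideal B}
    (hinf : toSubmodule A ⊓ N.restrictScalars R = I.restrictScalars R)
    (hsup : toSubmodule A ⊔ N.restrictScalars R = ⊤) : I ⋖ N := by
  have hIA : I.restrictScalars R ≤ toSubmodule A := hinf ▸ inf_le_left
  have hIN : I ≤ N := (hinf ▸ inf_le_right : I.restrictScalars R ≤ N.restrictScalars R)
  refine ⟨hIN.lt_of_ne ?_, fun J hIJ hJN => ?_⟩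
  · rintro rfl
    exact hA.1 (Algebra.toSubmodule_eq_top.1 (sup_eq_left.2 hIA ▸ hsup))
  · have hJN' : J.restrictScalars R ≤ N.restrictScalars R := hJN.le
    have hJA : ¬ J.restrictScalars R ≤ toSubmodule A := fun h =>
      hIJ.not_ge (hinf ▸ le_inf h hJN' : J.restrictScalars R ≤ I.restrictScalars R)
    have hJ : J.restrictScalars R = N.restrictScalars R := by
      refine eq_of_le_of_inf_le_of_sup_le (z := toSubmodule A) hJN' ?_ ?_
      · rw [inf_comm, hinf]
        exact le_inf hIJ.le hIA
      · rw [sup_comm (J.restrictScalars R), toSubmodule_sup_ideal_eq_top hA hJA]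
        exact le_top
    exact hJN.ne (Submodule.restrictScalars_injective R B B hJ)

theorem HasTrivialResidueFields.isCoatom_toSubmodule [Algebra.IsIntegral R B]
    (hres : HasTrivialResidueFields R B) (hA : IsCoatom A) : IsCoatom (toSubmodule A) := by
  have := module_finite_of_isCoatom hA
  obtain ⟨I, N, hN, hinf⟩ := exists_isMaximal_toSubmodule_inf_eq hA
  have hsup := toSubmodule_sup_ideal_eq_top_of_surjective A (hres N hN)
  have hIN : I ⋖ N := covBy_of_toSubmodule_inf_eq_of_sup_eq_top hA hinf hsup
  rw [← covBy_top_iff, ← hsup]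
  apply covBy_sup_of_inf_covBy_right
  rw [hinf]
  exact hres.covBy_restrictScalars hIN

end CoatomsOfSubalgebras

section Subextensions

variable {R S : Type*} [CommRing R] [CommRing S] [Algebra R S]

lemma isCoatom_comap_val {A B : Subalgebra R S} (hAB : A ⋖ B) : IsCoatom (A.comap B.val) := by
  have hmap : (A.comap B.val).map B.val = A :=
    Subalgebra.map_comap_eq_self (B.range_val.symm ▸ hAB.le)
  have htop : (⊤ : Subalgebra R B).map B.val = B := by rw [Algebra.map_top, B.range_val]
  have hinj : Function.Injective (Subalgebra.map B.val) :=
    Subalgebra.map_injective Subtype.val_injective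
  have hmono : StrictMono (Subalgebra.map B.val) :=
    Monotone.strictMono_of_injective (fun _ _ => Subalgebra.map_mono) hinj
  refine ⟨fun h => hAB.ne (by rw [← hmap, h, htop]), fun U hU => hinj ?_⟩
  have hAU : A < U.map B.val := hmap ▸ hmono hU
  have hUB : U.map B.val ≤ B := (Subalgebra.map_mono le_top).trans_eq htop
  rw [htop, (hAB.eq_or_eq hAU.le hUB).resolve_left hAU.ne']

lemma HasTrivialResidueFields.covBy_toSubmodule {A B : Subalgebra R S} [Algebra.IsIntegral R B]
    (hres : HasTrivialResidueFields R B) (hAB : A ⋖ B) :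
    Subalgebra.toSubmodule A ⋖ Subalgebra.toSubmodule B := by
  have hle : Subalgebra.toSubmodule A ≤ Subalgebra.toSubmodule B := hAB.le
  rw [covBy_iff_quot_is_simple hle]
  exact isSimpleModule_iff_isCoatom.2 (hres.isCoatom_toSubmodule (isCoatom_comap_val hAB))

theorem HasTrivialResidueFields.isCatenarianFromTo {T : Subalgebra R S} [Algebra.IsIntegral R T]
    (hres : HasTrivialResidueFields R T) (K : Subalgebra R S) :
    IsCatenarianFromTo K T := by
  refine (isCatenarianFromTo_of_isModularLattice _ _).of_map (f := Subalgebra.toSubmodule)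
    fun A B hBT hAB => ?_
  let _ : Algebra B T := (Subalgebra.inclusion hBT).toAlgebra
  have : IsScalarTower R B T := .of_algHom (Subalgebra.inclusion hBT)
  have : FaithfulSMul B T :=
    (faithfulSMul_iff_algebraMap_injective B T).2 (Subalgebra.inclusion_injective hBT)
  have : Algebra.IsIntegral B T := .tower_top R
  have : Algebra.IsIntegral R B := .of_injective (Subalgebra.inclusion hBT)
    (Subalgebra.inclusion_injective hBT)
  exact hres.tower_bot.covBy_toSubmodule hAB

end Subextensions

theorem stmt_15_general {R S : Type*} [CommRing R] [CommRing S] [Algebra R S]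
    (T : Subalgebra R S) [Algebra.IsIntegral R T] (hres : HasTrivialResidueFields R T)
    (hcat : IsCatenarianFromTo T (⊤ : Subalgebra R S))
    (hsplit : ∀ U : Subalgebra R S, U ≤ T ∨ T ≤ U) :
    IsCatenarianExt R S :=
  (hres.isCatenarianFromTo ⊥).trans hcat bot_le le_top fun U _ => hsplit U

/-- Let `R ⊆ S` be an integral FCP extension with t-closure `T`.
If `T ⊆ S` is catenarian and `[R,S] = [R,T] ∪ [T,S]`, then `R ⊆ S` is catenarian. -/
theorem stmt_15 {R S : Type*} [CommRing R] [CommRing S] [Algebra R S]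
    (hinj : Function.Injective (algebraMap R S)) (hFCP : IsFCPExt R S)
    (hint : Algebra.IsIntegral R S)
    (T : Subalgebra R S) (hT : IsTClosure T)
    (hcat : IsCatenarianFromTo T (⊤ : Subalgebra R S))
    (hsplit : ∀ U : Subalgebra R S, U ≤ T ∨ T ≤ U) :
    IsCatenarianExt R S := by
  have := hT.1.1
  exact stmt_15_general T hT.1.hasTrivialResidueFields hcat hsplit
end
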